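/- arXiv:1411.7763 — 2 statements merged into one kernel-verified Lean document; each statement's English description precedes it below -/
import Mathlib

section
/- For all integers b ≥ 1 and c ≥ 0, the polynomial Q_{b,c} satisfies the recursion Q_{b,c}(x,y,z,w) = w·y·(z−1)·q^{4b+8c−4}·Q_{b−1,c}(x,y,q^{−4}z,w) + w·x·(y−1)·y·z·q^{4b+4c−4}·Q_{b−1,c}(x,q^{−2}y,z,w) + (w−1)·(y−1)·q^{6b+8c−6}·Q_{b−1,c}(x,q^{−2}y,z,q^{−2}w) + w·(x−1)·y·(z−1)·q^{4b+8c−4}·Q_{b−1,c}(q^{−4}x,q^{2}y,q^{−4}z,w) + (w−1)·(x−1)·y·q^{6b+8c−6}·Q_{b−1,c}(q^{−4}x,y,z,q^{−2}w). (For c = 0 this is the defining recursion; for c ≥ 1 it is a nontrivial compatibility with the defining recursion in c.) -/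
noncomputable section

open MvPolynomial

/-- The field `K = ℚ(q)` of rational functions in `q` over `ℚ`. -/
abbrev K : Type := RatFunc ℚ

/-- The variable `q ∈ K = ℚ(q)`. -/
def q : K := RatFunc.X

/-- The polynomial ring `K[x,y,z,w]`. -/
abbrev P4 : Type := MvPolynomial (Fin 4) K

def xP : P4 := X 0
def yP : P4 := X 1
def zP : P4 := X 2
def wP : P4 := X 3

/-- The `K`-algebra map `K[x,y,z,w] → K[x,y,z,w]` rescaling the variables:
`x ↦ q^a·x`, `y ↦ q^b·y`, `z ↦ q^c·z`, `w ↦ q^d·w`. -/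
def scl (a b c d : ℤ) : P4 →ₐ[K] P4 :=
  aeval ![C (q ^ a) * X 0, C (q ^ b) * X 1, C (q ^ c) * X 2, C (q ^ d) * X 3]

/-- The polynomials `Q_{b,0}(x,y,z,w)`, defined by the recursion (rec1) of the paper. -/
def Qb0 : ℕ → P4
  | 0 => 1
  | b + 1 =>
      C (q ^ (4 * (b : ℤ))) * wP * yP * (zP - 1) * scl 0 0 (-4) 0 (Qb0 b)
    + C (q ^ (4 * (b : ℤ))) * wP * xP * (yP - 1) * yP * zP * scl 0 (-2) 0 0 (Qb0 b)
    + C (q ^ (6 * (b : ℤ))) * (wP - 1) * (yP - 1) * scl 0 (-2) 0 (-2) (Qb0 b)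
    + C (q ^ (4 * (b : ℤ))) * wP * (xP - 1) * yP * (zP - 1) * scl (-4) 2 (-4) 0 (Qb0 b)
    + C (q ^ (6 * (b : ℤ))) * (wP - 1) * (xP - 1) * yP * scl (-4) 0 0 (-2) (Qb0 b)

/-- The polynomials `Q_{b,c}(x,y,z,w)`: for `c ≥ 1` they are defined by the
recursion (rec2) of the paper, lowering `c`; for `c = 0` by `Qb0`. -/
def Q : ℕ → ℕ → P4
  | b, 0 => Qb0 b
  | b, c + 1 =>
      - (C (q ^ (4 * (b : ℤ) + 8 * (c : ℤ))) * wP ^ 2 * yP * (zP - 1) * zP)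
          * scl 0 0 (-4) 0 (Q b c)
    + (C (q ^ (4 * (b : ℤ) + 4 * (c : ℤ) - 2)) * wP * xP * (yP - 1) * zP)
          * (C (q ^ (2 * (b : ℤ) + 4 * (c : ℤ) + 4)) - C (q ^ (2 : ℤ)) * wP * yP * zP)
          * scl 0 (-2) 0 0 (Q b c)
    - (C (q ^ (6 * (b : ℤ) + 8 * (c : ℤ))) * (wP - 1) * wP * (yP - 1) * zP)
          * scl 0 (-2) 0 (-2) (Q b c)
    + (C (q ^ (4 * (b : ℤ) + 8 * (c : ℤ) - 2)) * wP * (xP - 1) * (zP - 1))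
          * (C (q ^ (2 * (b : ℤ) + 4 * (c : ℤ) + 4)) - C (q ^ (2 : ℤ)) * wP * yP * zP)
          * scl (-4) 2 (-4) 0 (Q b c)
    + (C (q ^ (6 * (b : ℤ) + 8 * (c : ℤ) - 2)) * (wP - 1) * (xP - 1))
          * (C (q ^ (2 * (b : ℤ) + 4 * (c : ℤ) + 4)) - C (q ^ (2 : ℤ)) * wP * yP * zP)
          * scl (-4) 0 0 (-2) (Q b c)

/-!
Write the recursion lowering `b` as `Q_{b+1,c} = A Q_{b,c}` and the one lowering `c` as
`Q_{b,c+1} = B Q_{b,c}`, with `q`-difference operators `A`, `B` depending on `(b, c)` only through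
`u = q^{2b}` and `v = q^{4c}`. Induction on `c` reduces the claim to
`A(u, q⁴v) B(u, v) = B(q²u, v) A(u, v)`.

Split `A = y D + E`, where `D` collects the three terms involving `x`. Then
`B = q²uv D - wz A`. Moving multiplications past scalings gives
`A(u, q⁴v) wz = wz A(q²u, v)` and `q² D(q²u, v) y = y D(u, q⁴v)`, so that everything follows from
`E(u, q⁴v) D(u, v) = q² D(q²u, v) E(u, v)`. The terms of `E` and `D` commute up to a power of `q`,
except for one four-term relation.
-/

lemma q_ne_zero : q ≠ 0 := RatFunc.X_ne_zero

section Scaling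

variable (a b c d : ℤ)

lemma scl_xP : scl a b c d xP = C (q ^ a) * xP := by simp [scl, xP]

lemma scl_yP : scl a b c d yP = C (q ^ b) * yP := by simp [scl, yP]

lemma scl_zP : scl a b c d zP = C (q ^ c) * zP := by simp [scl, zP]

lemma scl_wP : scl a b c d wP = C (q ^ d) * wP := by simp [scl, wP]

lemma scl_wP_mul_zP : scl a b c d (wP * zP) = C (q ^ (c + d)) * (wP * zP) := by
  rw [map_mul, scl_wP, scl_zP, zpow_add₀ q_ne_zero, C_mul]
  ring

lemma scl_scl (a' b' c' d' : ℤ) (p : P4) :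
    scl a b c d (scl a' b' c' d' p) = scl (a + a') (b + b') (c + c') (d + d') p := by
  suffices h : (scl a b c d).comp (scl a' b' c' d') = scl (a + a') (b + b') (c + c') (d + d') from
    DFunLike.congr_fun h p
  ext1 i
  fin_cases i <;>
  · simp only [scl, zpow_add₀ q_ne_zero, AlgHom.comp_apply, aeval_X, Fin.zero_eta, Fin.mk_one,
      Fin.reduceFinMk, Matrix.cons_val, map_mul, algHom_C, algebraMap_eq]
    ring

/-- The `q`-difference operator `p ↦ f · p(q^a x, q^b y, q^c z, q^d w)`; the operators of both
recursions are sums of such terms. -/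
def weightedScl (f : P4) : Module.End K P4 :=
  LinearMap.mulLeft K f * (scl a b c d).toLinearMap

lemma weightedScl_apply (f p : P4) : weightedScl a b c d f p = f * scl a b c d p := rfl

lemma weightedScl_mul_weightedScl (a' b' c' d' : ℤ) (f g : P4) :
    weightedScl a b c d f * weightedScl a' b' c' d' g
      = weightedScl (a + a') (b + b') (c + c') (d + d') (f * scl a b c d g) := by
  refine LinearMap.ext fun p => ?_
  simp only [Module.End.mul_apply, weightedScl_apply, map_mul, scl_scl, mul_assoc]

lemma weightedScl_add (f g : P4) :
    weightedScl a b c d (f + g) = weightedScl a b c d f + weightedScl a b c d g :=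
  LinearMap.ext fun _ => add_mul _ _ _

lemma smul_weightedScl (k : K) (f : P4) :
    k • weightedScl a b c d f = weightedScl a b c d (C k * f) := by
  refine LinearMap.ext fun p => ?_
  rw [LinearMap.smul_apply, weightedScl_apply, weightedScl_apply, smul_eq_C_mul, mul_assoc]

variable {a b c d}

lemma weightedScl_mul_mulLeft {g : P4} {k : K} (hg : scl a b c d g = C k * g) (f : P4) :
    weightedScl a b c d f * LinearMap.mulLeft K g
      = k • (LinearMap.mulLeft K g * weightedScl a b c d f) := by
  refine LinearMap.ext fun p => ?_
  simp only [Module.End.mul_apply, LinearMap.smul_apply, LinearMap.mulLeft_apply,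
    weightedScl_apply, map_mul, hg, smul_eq_C_mul]
  ring

end Scaling

/-- The term of the recursions scaling `z`; it is part of `E(u, v)`. -/
def termZ : Module.End K P4 := weightedScl 0 0 (-4) 0 (wP * yP * (zP - 1))

/-- The term of the recursions scaling `y` and `w`; it is part of `E(u, v)`. -/
def termYW : Module.End K P4 := weightedScl 0 (-2) 0 (-2) ((wP - 1) * (yP - 1))

/-- The term of the recursions scaling `y`, without its factor `y`; it is part of `D(u, v)`. -/
def termY : Module.End K P4 := weightedScl 0 (-2) 0 0 (wP * xP * (yP - 1) * zP)

/-- The term of the recursions scaling `x`, `y` and `z`, without its factor `y`; it is part of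
`D(u, v)`. -/
def termXYZ : Module.End K P4 := weightedScl (-4) 2 (-4) 0 (wP * (xP - 1) * (zP - 1))

/-- The term of the recursions scaling `x` and `w`, without its factor `y`; it is part of
`D(u, v)`. -/
def termXW : Module.End K P4 := weightedScl (-4) 0 0 (-2) ((wP - 1) * (xP - 1))

/-- The operator `D(u, v)`: `y D(u, v)` is the part of `A(u, v)` whose terms involve `x`. -/
def xPart (u v : K) : Module.End K P4 :=
  (u ^ 2 * v) • termY + (u ^ 2 * v ^ 2) • termXYZ + (u ^ 3 * v ^ 2) • termXW

/-- The operator `E(u, v)`: the part of `A(u, v)` that does not involve `x`. -/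
def xFreePart (u v : K) : Module.End K P4 :=
  (u ^ 2 * v ^ 2) • termZ + (u ^ 3 * v ^ 2) • termYW

/-- The operator `A(u, v)` of the recursion lowering `b`: it sends `Q_{b,c}` to `Q_{b+1,c}` when
`u = q^{2b}` and `v = q^{4c}`. -/
def lowerB (u v : K) : Module.End K P4 :=
  LinearMap.mulLeft K yP * xPart u v + xFreePart u v

/-- The operator `B(u, v)` of the recursion lowering `c`: it sends `Q_{b,c}` to `Q_{b,c+1}` when
`u = q^{2b}` and `v = q^{4c}`. -/
def lowerC (u v : K) : Module.End K P4 :=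
  (q ^ 2 * u * v) • xPart u v - LinearMap.mulLeft K (wP * zP) * lowerB u v

lemma C_q_sq_mul_C_q_zpow_neg_two : (C q ^ 2 * C (q ^ (-2 : ℤ)) : P4) = 1 := by
  rw [← C_pow, ← C_mul, zpow_neg, zpow_ofNat, mul_inv_cancel₀ (pow_ne_zero 2 q_ne_zero), C_1]

lemma C_q_zpow_neg_four : (C (q ^ (-4 : ℤ)) : P4) = C (q ^ (-2 : ℤ)) ^ 2 := by
  rw [← C_pow, ← zpow_natCast, ← zpow_mul]; rfl

lemma termZ_mul_termY : q ^ 2 • (termZ * termY) = termY * termZ := by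
  simp only [termZ, termY, weightedScl_mul_weightedScl, smul_weightedScl, map_mul, map_sub,
    map_one, scl_xP, scl_yP, scl_zP, scl_wP, C_q_zpow_neg_four, zpow_zero, C_pow]
  norm_num only
  congr 1
  grind [C_q_sq_mul_C_q_zpow_neg_two]

lemma termZ_mul_termXYZ : q ^ 2 • (termZ * termXYZ) = termXYZ * termZ := by
  simp only [termZ, termXYZ, weightedScl_mul_weightedScl, smul_weightedScl, map_mul, map_sub,
    map_one, scl_xP, scl_yP, scl_zP, scl_wP, C_q_zpow_neg_four, zpow_ofNat, C_pow]
  norm_num only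
  congr 1
  ring

lemma termYW_mul_termY : q ^ 2 • (termYW * termY) = termY * termYW := by
  simp only [termYW, termY, weightedScl_mul_weightedScl, smul_weightedScl, map_mul, map_sub,
    map_one, scl_xP, scl_yP, scl_zP, scl_wP, zpow_zero, C_pow]
  norm_num only
  congr 1
  grind [C_q_sq_mul_C_q_zpow_neg_two]

lemma commute_termYW_termXW : Commute termYW termXW := by
  simp only [Commute, SemiconjBy, termYW, termXW, weightedScl_mul_weightedScl, map_mul, map_sub,
    map_one, scl_xP, scl_yP, scl_wP, zpow_zero]
  norm_num only
  congr 1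
  ring

-- Both pairs compose to the same scaling, so only the sum of the two products is compatible.
lemma termZ_mul_termXW_add_termYW_mul_termXYZ :
    q ^ 2 • (termZ * termXW + termYW * termXYZ) = q ^ 2 • (termXW * termZ) + termXYZ * termYW := by
  simp only [termZ, termYW, termXYZ, termXW, weightedScl_mul_weightedScl, smul_add,
    smul_weightedScl, map_mul, map_sub, map_one, scl_xP, scl_yP, scl_zP, scl_wP, zpow_ofNat, C_pow]
  norm_num only
  simp only [← weightedScl_add]
  congr 1
  grind [C_q_sq_mul_C_q_zpow_neg_two]

lemma lowerB_mul_mulLeft_wP_mul_zP (u v : K) :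
    lowerB u (q ^ 4 * v) * LinearMap.mulLeft K (wP * zP)
      = LinearMap.mulLeft K (wP * zP) * lowerB (q ^ 2 * u) v := by
  have hyz : Commute (LinearMap.mulLeft K yP) (LinearMap.mulLeft K (wP * zP)) :=
    LinearMap.ext fun p => mul_left_comm yP (wP * zP) p
  simp only [lowerB, xPart, xFreePart, termZ, termYW, termY, termXYZ, termXW, add_mul, mul_add,
    mul_assoc, smul_mul_assoc, mul_smul_comm, weightedScl_mul_mulLeft (scl_wP_mul_zP _ _ _ _),
    hyz.left_comm]
  norm_num only
  refine LinearMap.ext fun p => ?_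
  simp only [LinearMap.add_apply, LinearMap.smul_apply, smul_eq_C_mul, C_mul, C_pow,
    C_q_zpow_neg_four, zpow_zero, C_1]
  grind [C_q_sq_mul_C_q_zpow_neg_two]

lemma xPart_mul_mulLeft_yP (u v : K) :
    q ^ 2 • (xPart (q ^ 2 * u) v * LinearMap.mulLeft K yP)
      = LinearMap.mulLeft K yP * xPart u (q ^ 4 * v) := by
  simp only [xPart, termY, termXYZ, termXW, add_mul, mul_add, smul_mul_assoc, mul_smul_comm,
    weightedScl_mul_mulLeft (scl_yP _ _ _ _)]
  refine LinearMap.ext fun p => ?_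
  simp only [LinearMap.add_apply, LinearMap.smul_apply, smul_eq_C_mul, C_mul, C_pow, zpow_ofNat]
  grind [C_q_sq_mul_C_q_zpow_neg_two]

lemma xFreePart_mul_xPart (u v : K) :
    xFreePart u (q ^ 4 * v) * xPart u v = q ^ 2 • (xPart (q ^ 2 * u) v * xFreePart u v) := by
  have hmixed := eq_sub_of_add_eq' termZ_mul_termXW_add_termYW_mul_termXYZ.symm
  simp only [xPart, xFreePart, add_mul, mul_add, smul_mul_assoc, mul_smul_comm,
    ← termZ_mul_termY, ← termZ_mul_termXYZ, ← termYW_mul_termY, ← commute_termYW_termXW.eq, hmixed]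
  refine LinearMap.ext fun p => ?_
  simp only [LinearMap.add_apply, LinearMap.sub_apply, LinearMap.smul_apply, smul_eq_C_mul, C_mul,
    C_pow]
  ring

lemma lowerB_mul_xPart (u v : K) :
    lowerB u (q ^ 4 * v) * xPart u v = q ^ 2 • (xPart (q ^ 2 * u) v * lowerB u v) := by
  rw [lowerB, lowerB, add_mul, mul_add, smul_add, xFreePart_mul_xPart, ← xPart_mul_mulLeft_yP,
    smul_mul_assoc, mul_assoc]

theorem lowerB_mul_lowerC (u v : K) :
    lowerB u (q ^ 4 * v) * lowerC u v = lowerC (q ^ 2 * u) v * lowerB u v := by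
  calc lowerB u (q ^ 4 * v) * lowerC u v
      = (q ^ 2 * u * v) • (lowerB u (q ^ 4 * v) * xPart u v)
          - lowerB u (q ^ 4 * v) * LinearMap.mulLeft K (wP * zP) * lowerB u v := by
        rw [lowerC, mul_sub, mul_smul_comm, ← mul_assoc (lowerB _ _)]
    _ = (q ^ 2 * u * v) • q ^ 2 • (xPart (q ^ 2 * u) v * lowerB u v)
          - LinearMap.mulLeft K (wP * zP) * lowerB (q ^ 2 * u) v * lowerB u v := by
        rw [lowerB_mul_xPart, lowerB_mul_mulLeft_wP_mul_zP]
    _ = lowerC (q ^ 2 * u) v * lowerB u v := by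
        rw [lowerC, sub_mul, smul_mul_assoc, smul_smul]
        congr 2
        ring

lemma lowerB_apply (u v : K) (p : P4) :
    lowerB u v p =
      C (u ^ 2 * v ^ 2) * wP * yP * (zP - 1) * scl 0 0 (-4) 0 p
      + C (u ^ 2 * v) * wP * xP * (yP - 1) * yP * zP * scl 0 (-2) 0 0 p
      + C (u ^ 3 * v ^ 2) * (wP - 1) * (yP - 1) * scl 0 (-2) 0 (-2) p
      + C (u ^ 2 * v ^ 2) * wP * (xP - 1) * yP * (zP - 1) * scl (-4) 2 (-4) 0 p
      + C (u ^ 3 * v ^ 2) * (wP - 1) * (xP - 1) * yP * scl (-4) 0 0 (-2) p := by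
  simp only [lowerB, xPart, xFreePart, termZ, termYW, termY, termXYZ, termXW, LinearMap.add_apply,
    LinearMap.smul_apply, Module.End.mul_apply, LinearMap.mulLeft_apply, weightedScl_apply,
    smul_eq_C_mul]
  ring

lemma lowerC_apply (u v : K) (p : P4) :
    lowerC u v p =
      -(C (u ^ 2 * v ^ 2) * wP ^ 2 * yP * (zP - 1) * zP) * scl 0 0 (-4) 0 p
      + C (u ^ 2 * v) * wP * xP * (yP - 1) * zP * (C (q ^ 2 * u * v) - wP * yP * zP)
          * scl 0 (-2) 0 0 p
      - C (u ^ 3 * v ^ 2) * (wP - 1) * wP * (yP - 1) * zP * scl 0 (-2) 0 (-2) p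
      + C (u ^ 2 * v ^ 2) * wP * (xP - 1) * (zP - 1) * (C (q ^ 2 * u * v) - wP * yP * zP)
          * scl (-4) 2 (-4) 0 p
      + C (u ^ 3 * v ^ 2) * (wP - 1) * (xP - 1) * (C (q ^ 2 * u * v) - wP * yP * zP)
          * scl (-4) 0 0 (-2) p := by
  rw [lowerC, LinearMap.sub_apply, LinearMap.smul_apply, Module.End.mul_apply, lowerB_apply]
  simp only [xPart, termY, termXYZ, termXW, LinearMap.add_apply, LinearMap.smul_apply,
    LinearMap.mulLeft_apply, weightedScl_apply, smul_eq_C_mul]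
  ring

lemma q_zpow_eq_of_eq {e i j : ℤ} {m n : ℕ} (he : e = 2 * i * m + 4 * j * n) :
    q ^ e = (q ^ (2 * i)) ^ m * (q ^ (4 * j)) ^ n := by
  rw [he, zpow_add₀ q_ne_zero, zpow_mul, zpow_mul _ (4 * j), zpow_natCast, zpow_natCast]

lemma Q_succ_zero (b : ℕ) : Q (b + 1) 0 = lowerB (q ^ (2 * (b : ℤ))) 1 (Q b 0) := by
  have h₄ : q ^ (4 * (b : ℤ)) = (q ^ (2 * (b : ℤ))) ^ 2 := by
    rw [← zpow_natCast, ← zpow_mul]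
    ring_nf
  have h₆ : q ^ (6 * (b : ℤ)) = (q ^ (2 * (b : ℤ))) ^ 3 := by
    rw [← zpow_natCast, ← zpow_mul]
    ring_nf
  simp only [lowerB_apply, Q, Qb0, h₄, h₆, one_pow, mul_one]

lemma Q_succ_right (b c : ℕ) :
    Q b (c + 1) = lowerC (q ^ (2 * (b : ℤ))) (q ^ (4 * (c : ℤ))) (Q b c) := by
  have h₄₈ : q ^ (4 * (b : ℤ) + 8 * c) = (q ^ (2 * (b : ℤ))) ^ 2 * (q ^ (4 * (c : ℤ))) ^ 2 :=
    q_zpow_eq_of_eq (by push_cast; ring)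
  have h₄₄ : q ^ (4 * (b : ℤ) + 4 * c) = (q ^ (2 * (b : ℤ))) ^ 2 * (q ^ (4 * (c : ℤ))) ^ 1 :=
    q_zpow_eq_of_eq (by push_cast; ring)
  have h₆₈ : q ^ (6 * (b : ℤ) + 8 * c) = (q ^ (2 * (b : ℤ))) ^ 3 * (q ^ (4 * (c : ℤ))) ^ 2 :=
    q_zpow_eq_of_eq (by push_cast; ring)
  rw [Q, lowerC_apply]
  simp only [sub_eq_add_neg _ (2 : ℤ), zpow_add₀ q_ne_zero _ (-2), zpow_add₀ q_ne_zero _ 4,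
    zpow_add₀ q_ne_zero (2 * (b : ℤ)), h₄₈, h₄₄, h₆₈, C_mul, C_pow, zpow_ofNat]
  grind [C_q_sq_mul_C_q_zpow_neg_two]

theorem Q_succ_left (b c : ℕ) :
    Q (b + 1) c = lowerB (q ^ (2 * (b : ℤ))) (q ^ (4 * (c : ℤ))) (Q b c) := by
  induction c with
  | zero => simpa using Q_succ_zero b
  | succ c ih =>
    have hb : q ^ (2 * ((b + 1 : ℕ) : ℤ)) = q ^ 2 * q ^ (2 * (b : ℤ)) := by
      rw [← zpow_natCast, ← zpow_add₀ q_ne_zero]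
      push_cast
      ring_nf
    have hc : q ^ (4 * ((c + 1 : ℕ) : ℤ)) = q ^ 4 * q ^ (4 * (c : ℤ)) := by
      rw [← zpow_natCast, ← zpow_add₀ q_ne_zero]
      push_cast
      ring_nf
    rw [Q_succ_right, Q_succ_right, ih, hb, hc, ← Module.End.mul_apply, ← Module.End.mul_apply,
      lowerB_mul_lowerC]

/-- for `b ≥ 1`, `c ≥ 0`, the recursion (rec1) lowering `b` holds
for `Q_{b,c}` (for `c = 0` it is the defining recursion, for `c ≥ 1` a
nontrivial compatibility). -/
theorem Q_rec_b (b c : ℕ) (hb : 1 ≤ b) :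
    Q b c =
      C (q ^ (4 * (b : ℤ) + 8 * (c : ℤ) - 4)) * wP * yP * (zP - 1)
          * scl 0 0 (-4) 0 (Q (b - 1) c)
    + C (q ^ (4 * (b : ℤ) + 4 * (c : ℤ) - 4)) * wP * xP * (yP - 1) * yP * zP
          * scl 0 (-2) 0 0 (Q (b - 1) c)
    + C (q ^ (6 * (b : ℤ) + 8 * (c : ℤ) - 6)) * (wP - 1) * (yP - 1)
          * scl 0 (-2) 0 (-2) (Q (b - 1) c)
    + C (q ^ (4 * (b : ℤ) + 8 * (c : ℤ) - 4)) * wP * (xP - 1) * yP * (zP - 1)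
          * scl (-4) 2 (-4) 0 (Q (b - 1) c)
    + C (q ^ (6 * (b : ℤ) + 8 * (c : ℤ) - 6)) * (wP - 1) * (xP - 1) * yP
          * scl (-4) 0 0 (-2) (Q (b - 1) c) := by
  obtain ⟨b, rfl⟩ := Nat.exists_eq_add_of_le' hb
  have h₄₈ : q ^ (4 * ((b + 1 : ℕ) : ℤ) + 8 * (c : ℤ) - 4)
      = (q ^ (2 * (b : ℤ))) ^ 2 * (q ^ (4 * (c : ℤ))) ^ 2 :=
    q_zpow_eq_of_eq (by push_cast; ring)
  have h₄₄ : q ^ (4 * ((b + 1 : ℕ) : ℤ) + 4 * (c : ℤ) - 4)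
      = (q ^ (2 * (b : ℤ))) ^ 2 * (q ^ (4 * (c : ℤ))) ^ 1 :=
    q_zpow_eq_of_eq (by push_cast; ring)
  have h₆₈ : q ^ (6 * ((b + 1 : ℕ) : ℤ) + 8 * (c : ℤ) - 6)
      = (q ^ (2 * (b : ℤ))) ^ 3 * (q ^ (4 * (c : ℤ))) ^ 2 :=
    q_zpow_eq_of_eq (by push_cast; ring)
  rw [Nat.add_sub_cancel, Q_succ_left, lowerB_apply, h₄₈, h₄₄, h₆₈, pow_one]
end
end

section
/- For all (b,c) ∈ ℤ_{≥0}², every coefficient of Q_{b,c} (an element of K = ℚ(q)) lies in the subring ℤ[q²]; that is, each coefficient is the image in K of a polynomial in q with integer coefficients in which only even powers of q occur. -/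
noncomputable section

open MvPolynomial

/-!
Write `s = 2i - j`, `r = j + c - i - k`, `g = l - k` and `p = b + 2k - j - l`. The exponents
`(i, j, k, l)` of the monomials of `Q_{b,c}` lie in the polytope where these four slacks are
nonnegative. On a monomial of that polytope, each rescaling in the recursion together with its
power of `q` acts as a power of `q²` whose exponent is a combination of `p, g, r, s` with
nonnegative coefficients. The only obstruction is that a step might leave the polytope, but it does
so only along monomials whose coefficient contains `q^{2s} - 1`, `q^{4r} - 1` or `q^{2p} - 1`, a
factor that vanishes when the slack about to become negative is zero. Hence the recursion preserves
the `ℤ[q²]`-span of the monomials of the polytope.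
-/

/-- The subring `ℤ[q²]` of `K`. -/
abbrev intQSq : Subring K := Subring.closure {q ^ (2 : ℕ)}

/-- The constant polynomial `q²`. -/
def qSq : P4 := C (q ^ (2 : ℕ))

lemma qSq_pow_mul_mem {N : Submodule intQSq P4} {P : P4} (n : ℕ) (hP : P ∈ N) :
    qSq ^ n * P ∈ N := by
  have hq : (q ^ 2) ^ n ∈ intQSq := pow_mem (Subring.subset_closure (Set.mem_singleton _)) n
  rw [qSq, ← C_pow, ← smul_eq_C_mul]
  exact N.smul_mem ⟨_, hq⟩ hP

lemma qSq_pow_sub_one_mul_mem {N : Submodule intQSq P4} {P : P4} (n : ℕ)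
    (hP : n ≠ 0 → P ∈ N) : (qSq ^ n - 1) * P ∈ N := by
  rcases eq_or_ne n 0 with rfl | hn
  · simp
  · rw [sub_mul, one_mul]
    exact sub_mem (qSq_pow_mul_mem n (hP hn)) (hP hn)

/-- The monomial `x^i y^j z^k w^l`. -/
def xyzw (i j k l : ℕ) : P4 := xP ^ i * yP ^ j * zP ^ k * wP ^ l

lemma xyzw_eq_monomial (i j k l : ℕ) :
    xyzw i j k l = monomial (Finsupp.single 0 i + Finsupp.single 1 j + Finsupp.single 2 k
      + Finsupp.single 3 l) 1 := by
  simp [xyzw, xP, yP, zP, wP, X_pow_eq_monomial, monomial_mul]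

/-- The polytope containing the exponents `(i, j, k, l)` of the monomials `x^i y^j z^k w^l` of
`Q_{b,c}`, with the inequalities arranged so that no subtraction occurs. -/
structure InPolytope (b c i j k l : ℕ) : Prop where
  y_le : j ≤ 2 * i
  xz_le : i + k ≤ j + c
  z_le : k ≤ l
  yw_le : j + l ≤ b + 2 * k

lemma InPolytope.exists_slacks {b c i j k l : ℕ} (h : InPolytope b c i j k l) :
    ∃ s r g p, j + s = 2 * i ∧ i + k + r = j + c ∧ k + g = l ∧ j + l + p = b + 2 * k :=
  ⟨_, _, _, _, Nat.add_sub_of_le h.y_le, Nat.add_sub_of_le h.xz_le, Nat.add_sub_of_le h.z_le,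
    Nat.add_sub_of_le h.yw_le⟩

/-- The `ℤ[q²]`-lattice spanned by the monomials of the polytope `InPolytope b c`; it is the
invariant propagated along the recursion for `Q_{b,c}`. -/
def polytopeLattice (b c : ℕ) : Submodule intQSq P4 :=
  Submodule.span intQSq {P | ∃ i j k l, InPolytope b c i j k l ∧ xyzw i j k l = P}

section Lattice

variable {b c : ℕ}

lemma xyzw_mem_polytopeLattice {i j k l : ℕ} (h : InPolytope b c i j k l) :
    xyzw i j k l ∈ polytopeLattice b c :=
  Submodule.subset_span ⟨i, j, k, l, h, rfl⟩

lemma map_mem_of_mem_polytopeLattice {N : Submodule intQSq P4} (f : P4 →ₗ[K] P4)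
    (hf : ∀ i j k l, InPolytope b c i j k l → f (xyzw i j k l) ∈ N) {P : P4}
    (hP : P ∈ polytopeLattice b c) : f P ∈ N := by
  have hle : polytopeLattice b c ≤ N.comap (f.restrictScalars intQSq) := by
    refine Submodule.span_le.2 ?_
    rintro _ ⟨i, j, k, l, h, rfl⟩
    exact hf i j k l h
  exact hle hP

lemma wz_mul_mem_polytopeLattice {P : P4} (hP : P ∈ polytopeLattice (b + 1) c) :
    wP * zP * P ∈ polytopeLattice b (c + 1) := by
  rw [← LinearMap.mulLeft_apply K]
  refine map_mem_of_mem_polytopeLattice _ (fun i j k l h => ?_) hP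
  obtain ⟨hy, hxz, hz, hyw⟩ := h
  have hmul : wP * zP * xyzw i j k l = xyzw i j (k + 1) (l + 1) := by
    unfold xyzw
    ring
  rw [LinearMap.mulLeft_apply, hmul]
  exact xyzw_mem_polytopeLattice (by constructor <;> lia)

lemma coeff_mem_of_mem_polytopeLattice {P : P4} (hP : P ∈ polytopeLattice b c)
    (m : Fin 4 →₀ ℕ) : coeff m P ∈ intQSq := by
  have hle : polytopeLattice b c ≤ coeffsIn (Fin 4) (1 : Submodule intQSq K) := by
    refine Submodule.span_le.2 ?_
    rintro _ ⟨i, j, k, l, -, rfl⟩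
    rw [SetLike.mem_coe, xyzw_eq_monomial, monomial_mem_coeffsIn]
    exact Submodule.one_le.1 le_rfl
  obtain ⟨a, ha⟩ := Submodule.mem_one.1 (hle hP m)
  exact ha ▸ a.2

end Lattice

lemma scl_xyzw (α β γ δ : ℤ) (i j k l : ℕ) :
    scl α β γ δ (xyzw i j k l) = C (q ^ (α * i + β * j + γ * k + δ * l)) * xyzw i j k l := by
  have hpow (n : ℤ) (m : ℕ) : (C (q ^ n) : P4) ^ m = C (q ^ (n * m)) := by
    rw [← C_pow, zpow_mul, zpow_natCast]
  simp only [scl, xyzw, xP, yP, zP, wP, map_mul, map_pow, aeval_X, Matrix.cons_val, mul_pow, hpow,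
    zpow_add₀ q_ne_zero]
  ring

/-- The rescaling `scl α β γ δ` followed by multiplication by the scalar `q^n`. -/
def qScl (n α β γ δ : ℤ) : P4 →ₗ[K] P4 := q ^ n • (scl α β γ δ).toLinearMap

lemma qScl_apply (n α β γ δ : ℤ) (P : P4) :
    qScl n α β γ δ P = C (q ^ n) * scl α β γ δ P := by
  simp [qScl, smul_eq_C_mul]

lemma qScl_xyzw {n α β γ δ : ℤ} {i j k l : ℕ} (N : ℕ)
    (h : n + (α * i + β * j + γ * k + δ * l) = 2 * N) :
    qScl n α β γ δ (xyzw i j k l) = qSq ^ N * xyzw i j k l := by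
  have hN : q ^ (2 * (N : ℤ)) = (q ^ 2) ^ N := by
    rw [← pow_mul]
    exact_mod_cast zpow_natCast q (2 * N)
  rw [qScl_apply, scl_xyzw, ← mul_assoc, ← C_mul, ← zpow_add₀ q_ne_zero, h, hN, C_pow, qSq]

/-- The operator of the recursion in `b`, with prefactors depending also on `c`: for `c = 0` it
sends `Q_{b,0}` to `Q_{b+1,0}`, and for all `c` it is one of the two parts of the recursion
in `c`. -/
def stepB (b c : ℕ) : P4 →ₗ[K] P4 :=
  LinearMap.mulLeft K (wP * yP * (zP - 1)) ∘ₗ qScl (4 * b + 8 * c) 0 0 (-4) 0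
  + LinearMap.mulLeft K (wP * xP * (yP - 1) * yP * zP) ∘ₗ qScl (4 * b + 4 * c) 0 (-2) 0 0
  + LinearMap.mulLeft K ((wP - 1) * (yP - 1)) ∘ₗ qScl (6 * b + 8 * c) 0 (-2) 0 (-2)
  + LinearMap.mulLeft K (wP * (xP - 1) * yP * (zP - 1)) ∘ₗ qScl (4 * b + 8 * c) (-4) 2 (-4) 0
  + LinearMap.mulLeft K ((wP - 1) * (xP - 1) * yP) ∘ₗ qScl (6 * b + 8 * c) (-4) 0 0 (-2)

/-- The part of the recursion in `c` other than `-wz · stepB b c`, stripped of the factor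
`q^{2b+4c+2}`; see `Q_succ`. -/
def stepC (b c : ℕ) : P4 →ₗ[K] P4 :=
  LinearMap.mulLeft K (wP * xP * (yP - 1) * zP) ∘ₗ qScl (4 * b + 4 * c) 0 (-2) 0 0
  + LinearMap.mulLeft K (wP * (xP - 1) * (zP - 1)) ∘ₗ qScl (4 * b + 8 * c) (-4) 2 (-4) 0
  + LinearMap.mulLeft K ((wP - 1) * (xP - 1)) ∘ₗ qScl (6 * b + 8 * c) (-4) 0 0 (-2)

lemma Qb0_succ (b : ℕ) : Qb0 (b + 1) = stepB b 0 (Qb0 b) := by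
  simp only [Qb0, stepB, LinearMap.add_apply, LinearMap.comp_apply, LinearMap.mulLeft_apply,
    qScl_apply, Nat.cast_zero, mul_zero, add_zero]
  ring

lemma Q_succ (b c : ℕ) :
    Q b (c + 1) = qSq ^ (b + 2 * c + 1) * stepC b c (Q b c) - wP * zP * stepB b c (Q b c) := by
  have hfactor (n : ℤ) : (C (q ^ (n - 2)) : P4)
      * (C (q ^ (2 * (b : ℤ) + 4 * c + 4)) - C (q ^ (2 : ℤ)) * wP * yP * zP)
      = C (q ^ n) * (qSq ^ (b + 2 * c + 1) - wP * yP * zP) := by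
    have hsub : (C (q ^ (n - 2)) : P4) * C (q ^ (2 : ℤ)) = C (q ^ n) := by
      rw [← C_mul, ← zpow_add₀ q_ne_zero, sub_add_cancel]
    have hpow : (C (q ^ (2 * (b : ℤ) + 4 * c + 4)) : P4)
        = C (q ^ (2 : ℤ)) * qSq ^ (b + 2 * c + 1) := by
      rw [qSq, ← C_pow, ← C_mul, ← pow_mul, ← zpow_natCast, ← zpow_add₀ q_ne_zero]
      congr 2
      push_cast
      ring
    rw [hpow, ← hsub]
    ring
  simp only [Q, stepB, stepC, LinearMap.add_apply, LinearMap.comp_apply, LinearMap.mulLeft_apply,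
    qScl_apply]
  linear_combination
    wP * xP * (yP - 1) * zP * scl 0 (-2) 0 0 (Q b c) * hfactor (4 * b + 4 * c)
    + wP * (xP - 1) * (zP - 1) * scl (-4) 2 (-4) 0 (Q b c) * hfactor (4 * b + 8 * c)
    + (wP - 1) * (xP - 1) * scl (-4) 0 0 (-2) (Q b c) * hfactor (6 * b + 8 * c)

section Steps

variable {b c i j k l p r s g : ℕ}

lemma stepB_xyzw (hs : j + s = 2 * i) (hr : i + k + r = j + c) (hg : k + g = l)
    (hp : j + l + p = b + 2 * k) :
    stepB b c (xyzw i j k l) = qSq ^ (2 * p + 2 * g + 2 * r + s) *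
      (qSq ^ (2 * r) * ((qSq ^ s - 1) * xyzw i (j + 1) (k + 1) (l + 1))
      + qSq ^ (2 * r) * ((qSq ^ s - 1) * ((qSq ^ p - 1) * xyzw i (j + 1) k (l + 1)))
      - qSq ^ (2 * r + p) * ((qSq ^ s - 1) * xyzw i (j + 1) k l)
      + (qSq ^ (2 * r) - 1) * xyzw (i + 1) (j + 1) (k + 1) (l + 1)
      + qSq ^ (2 * r) * ((qSq ^ p - 1) * xyzw (i + 1) (j + 1) k (l + 1))
      - qSq ^ (2 * r + p) * xyzw (i + 1) (j + 1) k l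
      + xyzw (i + 1) (j + 2) (k + 1) (l + 1)
      - qSq ^ (2 * r + s + p) * xyzw i j k (l + 1)
      + qSq ^ (2 * r + s + p) * xyzw i j k l) := by
  simp only [stepB, LinearMap.add_apply, LinearMap.comp_apply, LinearMap.mulLeft_apply]
  rw [qScl_xyzw (2 * p + 2 * g + 4 * r + 2 * s) (by lia),
    qScl_xyzw (2 * p + 2 * g + 2 * r + s) (by lia),
    qScl_xyzw (3 * p + 2 * g + 4 * r + 2 * s) (by lia),
    qScl_xyzw (2 * p + 2 * g + 4 * r + s) (by lia),
    qScl_xyzw (3 * p + 2 * g + 4 * r + s) (by lia)]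
  unfold xyzw
  ring

lemma stepC_xyzw (hs : j + s = 2 * i) (hr : i + k + r = j + c) (hg : k + g = l)
    (hp : j + l + p = b + 2 * k) :
    stepC b c (xyzw i j k l) = qSq ^ (2 * p + 2 * g + 2 * r + s) *
      (xyzw (i + 1) (j + 1) (k + 1) (l + 1)
      + (qSq ^ (2 * r) - 1) * xyzw (i + 1) j (k + 1) (l + 1)
      - qSq ^ (2 * r) * xyzw i j (k + 1) (l + 1)
      + qSq ^ (2 * r) * ((qSq ^ p - 1) * xyzw (i + 1) j k (l + 1))
      - qSq ^ (2 * r) * ((qSq ^ p - 1) * xyzw i j k (l + 1))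
      - qSq ^ (2 * r + p) * xyzw (i + 1) j k l
      + qSq ^ (2 * r + p) * xyzw i j k l) := by
  simp only [stepC, LinearMap.add_apply, LinearMap.comp_apply, LinearMap.mulLeft_apply]
  rw [qScl_xyzw (2 * p + 2 * g + 2 * r + s) (by lia),
    qScl_xyzw (2 * p + 2 * g + 4 * r + s) (by lia),
    qScl_xyzw (3 * p + 2 * g + 4 * r + s) (by lia)]
  unfold xyzw
  ring

lemma stepB_mem_polytopeLattice {P : P4} (hP : P ∈ polytopeLattice b c) :
    stepB b c P ∈ polytopeLattice (b + 1) c := by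
  refine map_mem_of_mem_polytopeLattice (stepB b c) (fun i j k l h => ?_) hP
  obtain ⟨s, r, g, p, hs, hr, hg, hp⟩ := h.exists_slacks
  have h_wyz : (qSq ^ s - 1) * xyzw i (j + 1) (k + 1) (l + 1) ∈ polytopeLattice (b + 1) c :=
    qSq_pow_sub_one_mul_mem _ fun _ => xyzw_mem_polytopeLattice (by constructor <;> lia)
  have h_wy : (qSq ^ s - 1) * ((qSq ^ p - 1) * xyzw i (j + 1) k (l + 1))
      ∈ polytopeLattice (b + 1) c :=
    qSq_pow_sub_one_mul_mem _ fun _ => qSq_pow_sub_one_mul_mem _ fun _ =>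
      xyzw_mem_polytopeLattice (by constructor <;> lia)
  have h_y : (qSq ^ s - 1) * xyzw i (j + 1) k l ∈ polytopeLattice (b + 1) c :=
    qSq_pow_sub_one_mul_mem _ fun _ => xyzw_mem_polytopeLattice (by constructor <;> lia)
  have h_wxyz : (qSq ^ (2 * r) - 1) * xyzw (i + 1) (j + 1) (k + 1) (l + 1)
      ∈ polytopeLattice (b + 1) c :=
    qSq_pow_sub_one_mul_mem _ fun _ => xyzw_mem_polytopeLattice (by constructor <;> lia)
  have h_wxy : (qSq ^ p - 1) * xyzw (i + 1) (j + 1) k (l + 1) ∈ polytopeLattice (b + 1) c :=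
    qSq_pow_sub_one_mul_mem _ fun _ => xyzw_mem_polytopeLattice (by constructor <;> lia)
  have h_xy : xyzw (i + 1) (j + 1) k l ∈ polytopeLattice (b + 1) c :=
    xyzw_mem_polytopeLattice (by constructor <;> lia)
  have h_wxyyz : xyzw (i + 1) (j + 2) (k + 1) (l + 1) ∈ polytopeLattice (b + 1) c :=
    xyzw_mem_polytopeLattice (by constructor <;> lia)
  have h_w : xyzw i j k (l + 1) ∈ polytopeLattice (b + 1) c :=
    xyzw_mem_polytopeLattice (by constructor <;> lia)
  have h_one : xyzw i j k l ∈ polytopeLattice (b + 1) c :=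
    xyzw_mem_polytopeLattice (by constructor <;> lia)
  rw [stepB_xyzw hs hr hg hp]
  exact qSq_pow_mul_mem _ (add_mem (sub_mem (add_mem (sub_mem (add_mem (add_mem (sub_mem (add_mem
    (qSq_pow_mul_mem _ h_wyz) (qSq_pow_mul_mem _ h_wy)) (qSq_pow_mul_mem _ h_y)) h_wxyz)
    (qSq_pow_mul_mem _ h_wxy)) (qSq_pow_mul_mem _ h_xy)) h_wxyyz) (qSq_pow_mul_mem _ h_w))
    (qSq_pow_mul_mem _ h_one))

lemma stepC_mem_polytopeLattice {P : P4} (hP : P ∈ polytopeLattice b c) :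
    stepC b c P ∈ polytopeLattice b (c + 1) := by
  refine map_mem_of_mem_polytopeLattice (stepC b c) (fun i j k l h => ?_) hP
  obtain ⟨s, r, g, p, hs, hr, hg, hp⟩ := h.exists_slacks
  have h_wxyz : xyzw (i + 1) (j + 1) (k + 1) (l + 1) ∈ polytopeLattice b (c + 1) :=
    xyzw_mem_polytopeLattice (by constructor <;> lia)
  have h_wxz : (qSq ^ (2 * r) - 1) * xyzw (i + 1) j (k + 1) (l + 1)
      ∈ polytopeLattice b (c + 1) :=
    qSq_pow_sub_one_mul_mem _ fun _ => xyzw_mem_polytopeLattice (by constructor <;> lia)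
  have h_wz : xyzw i j (k + 1) (l + 1) ∈ polytopeLattice b (c + 1) :=
    xyzw_mem_polytopeLattice (by constructor <;> lia)
  have h_wx : (qSq ^ p - 1) * xyzw (i + 1) j k (l + 1) ∈ polytopeLattice b (c + 1) :=
    qSq_pow_sub_one_mul_mem _ fun _ => xyzw_mem_polytopeLattice (by constructor <;> lia)
  have h_w : (qSq ^ p - 1) * xyzw i j k (l + 1) ∈ polytopeLattice b (c + 1) :=
    qSq_pow_sub_one_mul_mem _ fun _ => xyzw_mem_polytopeLattice (by constructor <;> lia)
  have h_x : xyzw (i + 1) j k l ∈ polytopeLattice b (c + 1) :=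
    xyzw_mem_polytopeLattice (by constructor <;> lia)
  have h_one : xyzw i j k l ∈ polytopeLattice b (c + 1) :=
    xyzw_mem_polytopeLattice (by constructor <;> lia)
  rw [stepC_xyzw hs hr hg hp]
  exact qSq_pow_mul_mem _ (add_mem (sub_mem (sub_mem (add_mem (sub_mem (add_mem
    h_wxyz h_wxz) (qSq_pow_mul_mem _ h_wz)) (qSq_pow_mul_mem _ h_wx)) (qSq_pow_mul_mem _ h_w))
    (qSq_pow_mul_mem _ h_x)) (qSq_pow_mul_mem _ h_one))

end Steps

lemma Qb0_mem_polytopeLattice (b : ℕ) : Qb0 b ∈ polytopeLattice b 0 := by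
  induction b with
  | zero =>
    have h_one : Qb0 0 = xyzw 0 0 0 0 := by simp [Qb0, xyzw]
    rw [h_one]
    exact xyzw_mem_polytopeLattice (by constructor <;> lia)
  | succ b ih =>
    rw [Qb0_succ]
    exact stepB_mem_polytopeLattice ih

lemma Q_mem_polytopeLattice (b c : ℕ) : Q b c ∈ polytopeLattice b c := by
  induction c with
  | zero =>
    rw [Q]
    exact Qb0_mem_polytopeLattice b
  | succ c ih =>
    rw [Q_succ]
    exact sub_mem (qSq_pow_mul_mem _ (stepC_mem_polytopeLattice ih))
      (wz_mul_mem_polytopeLattice (stepB_mem_polytopeLattice ih))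

/-- every coefficient of `Q_{b,c}` lies in the subring
`ℤ[q²] ⊆ K = ℚ(q)`. -/
theorem Q_coeff_mem (b c : ℕ) (m : Fin 4 →₀ ℕ) :
    MvPolynomial.coeff m (Q b c) ∈ Subring.closure {q ^ (2 : ℕ)} :=
  coeff_mem_of_mem_polytopeLattice (Q_mem_polytopeLattice b c) m
end
end
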